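/- Let k ≥ 3 and x = p_{2k−2} − 1. Every odd integer v in [1,x] either has all of its prime divisors among {p_2,...,p_{k−1}} or is itself one of the primes p_k,...,p_{2k−3}; consequently exactly x/2 − (k−2) odd integers in [1,x] have all prime divisors among {p_2,...,p_{k−1}} (counting 1 among them). -/

import Mathlib

/-!
If an odd `v < p_{2k-2}` has a prime divisor `q ≥ p_k` and `v ≠ q`, then `v ≥ 3q ≥ 3 p_k`. So the
dichotomy follows from `p_{2k-2} ≤ 3 p_k` (`nth_prime_le_three_mul`), and the count follows by
removing the `k - 2` primes `p_k, …, p_{2k-3}` from the `x / 2` odd numbers in `[1, x]`.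

Since `π(p_k) = k`, the inequality `p_{2k-2} ≤ 3 p_k` is the case `n = p_k` of
`2 π(n) ≤ π(3n) + 2`, which is proved for every `n ≥ 5` (`two_mul_pi_le`).

For `n ≥ 320000` the proof uses Chebyshev's combination
`log (N! ⌊N/30⌋! / (⌊N/2⌋! ⌊N/3⌋! ⌊N/5⌋!)) = A N + O(log N)`, where `A = 0.92129…`. It is at most
`ψ(N)`, which gives `π(3n) log (3n) ≥ ψ(3n) ≥ 3 A n - 5 log (3n)`. It is at least
`θ(N) - θ(N/6)`, which gives `θ(N) ≤ 1.12 N + 70` and then, by partial summation,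
`π(n) ≤ 1.12 n / log n + 1.5 n / log² n + 440`. As `2 · 1.12 < 3 · 0.92`, this suffices for large
`n`, and the constants are good enough from `320000` on.

For smaller `n` the range is cut into intervals `[a, b)` with `2 π'(b) ≤ π'(3a) + 2`, where `π'`
counts the primes strictly below its argument; monotonicity then gives the inequality on the whole
interval. The values of `π'` come from the sieve of Eratosthenes, performed by computing greatest
common divisors with a primorial.
-/

/-! ### Values of the prime counting function -/

/-- `sievedOdds P d a l` counts those among the `l` numbers `a, a + 2, …, a + 2 (l - 1)` that are
coprime to `P`, provided `l ≤ 2 ^ d`. The summand `2 - gcd P m`, with truncated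
subtraction, is `1` when `m` is coprime to `P` and `0` otherwise (for `m ≠ 0`). The range is halved
`d` times, and the function is written
with `Nat.rec` and the arithmetic functions which the kernel evaluates on binary numerals, so that
ranges of several hundred thousand numbers can be evaluated by `decide +kernel`. -/
def sievedOdds (P d : ℕ) : ℕ → ℕ → ℕ :=
  Nat.rec (fun a l => Nat.mul l (Nat.sub 2 (Nat.gcd P a)))
    (fun _ ih a l => Nat.add (ih a (Nat.div l 2))
      (ih (Nat.add a (Nat.mul 2 (Nat.div l 2))) (Nat.sub l (Nat.div l 2)))) d

lemma sievedOdds_zero (P a l : ℕ) : sievedOdds P 0 a l = l * (2 - Nat.gcd P a) := rfl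

lemma sievedOdds_succ (P d a l : ℕ) : sievedOdds P (d + 1) a l =
    sievedOdds P d a (l / 2) + sievedOdds P d (a + 2 * (l / 2)) (l - l / 2) := rfl

lemma sievedOdds_eq_sum (P d : ℕ) : ∀ a l : ℕ, l ≤ 2 ^ d →
    sievedOdds P d a l = ∑ i ∈ Finset.range l, (2 - Nat.gcd P (a + 2 * i)) := by
  induction d with
  | zero =>
    intro a l hl
    have : l = 0 ∨ l = 1 := by rw [pow_zero] at hl; omega
    rcases this with rfl | rfl <;> simp [sievedOdds_zero]
  | succ d ih =>
    intro a l hl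
    rw [pow_succ] at hl
    rw [sievedOdds_succ, ih _ _ (by omega), ih _ _ (by omega)]
    obtain ⟨r, hr⟩ : ∃ r, l = l / 2 + r := ⟨l - l / 2, by omega⟩
    have h2 : l - l / 2 = r := by omega
    rw [h2]
    conv_rhs => rw [hr, Finset.sum_range_add]
    congr 1
    refine Finset.sum_congr rfl fun i _ => ?_
    ring_nf

/-- The sieve of Eratosthenes: if the primes dividing `P` are those below `y`, then the primes
in `[y, y ^ 2)` are the numbers coprime to `P`. -/
lemma prime_iff_gcd_eq_one {P y n : ℕ} (hP : ∀ p : ℕ, p.Prime → (p ∣ P ↔ p < y))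
    (hy : 2 ≤ y) (h1 : y ≤ n) (h2 : n < y ^ 2) : n.Prime ↔ Nat.gcd P n = 1 := by
  constructor
  · intro hn
    exact Nat.Coprime.symm ((Nat.Prime.coprime_iff_not_dvd hn).2
      (fun h => absurd ((hP n hn).1 h) (by omega)))
  · intro h
    by_contra hn
    have hmf := Nat.minFac_prime (n := n) (by omega)
    have hsq := Nat.minFac_sq_le_self (by omega) hn
    have hlt : n.minFac < y := lt_of_pow_lt_pow_left₀ 2 (by omega) (by omega)
    exact hmf.one_lt.ne' (Nat.eq_one_of_dvd_coprimes h
      ((hP _ hmf).2 hlt) (Nat.minFac_dvd n))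

lemma primeCounting'_add_two_mul {P y a : ℕ} (hP : ∀ p : ℕ, p.Prime → (p ∣ P ↔ p < y))
    (hy : 3 ≤ y) (ha : y ≤ a) (hodd : a % 2 = 1) (l : ℕ) (hl : a + 2 * l ≤ y ^ 2 + 1) :
    Nat.primeCounting' (a + 2 * l) =
      Nat.primeCounting' a + ∑ i ∈ Finset.range l, (2 - Nat.gcd P (a + 2 * i)) := by
  induction l with
  | zero => simp
  | succ l ih =>
    have h0 := ih (by omega)
    rw [Finset.sum_range_succ, ← add_assoc, ← h0]
    have e : a + 2 * (l + 1) = a + 2 * l + 1 + 1 := by ring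
    have h2 : ¬ (a + 2 * l + 1).Prime := fun h => by
      rcases h.eq_two_or_odd with h | h <;> omega
    have hg : 0 < Nat.gcd P (a + 2 * l) := Nat.gcd_pos_of_pos_right _ (by omega)
    have key := prime_iff_gcd_eq_one (n := a + 2 * l) hP (by omega) (by omega) (by omega)
    rw [e, Nat.primeCounting', Nat.count_succ, Nat.count_succ, if_neg h2]
    by_cases h : (a + 2 * l).Prime
    · simp [h, key.1 h]
    · have : Nat.gcd P (a + 2 * l) ≠ 1 := fun h' => h (key.2 h')
      simp only [h, if_false]
      omega

/-- One step in the computation of a table of values of `π'`, from `a` to `b`; the side conditions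
are Boolean so that the kernel evaluates them on binary numerals. -/
lemma primeCounting'_step {P y : ℕ} (hP : ∀ p : ℕ, p.Prime → (p ∣ P ↔ p < y))
    (hy : 3 ≤ y) (d : ℕ) {a b s t : ℕ} (hs : Nat.primeCounting' a = s)
    (hab : Nat.ble y a && Nat.ble a b && Nat.ble b (y ^ 2) && Nat.beq (a % 2) 1 &&
      Nat.beq (b % 2) 1 && Nat.ble ((b - a) / 2) (2 ^ d) = true)
    (h : Nat.beq (s + sievedOdds P d a ((b - a) / 2)) t = true) :
    Nat.primeCounting' b = t := by
  simp only [Bool.and_eq_true, Nat.ble_eq, Nat.beq_eq, decide_eq_true_eq] at hab h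
  obtain ⟨⟨⟨⟨⟨h1, h2⟩, h3⟩, h4⟩, h5⟩, h6⟩ := hab
  have e : b = a + 2 * ((b - a) / 2) := by omega
  rw [e, primeCounting'_add_two_mul hP hy h1 h4 _ (by omega), hs,
    ← sievedOdds_eq_sum P d a _ h6, h]

/-- The primes dividing `P` are those below `y`, from two facts that the kernel can evaluate. -/
lemma prime_dvd_iff_lt {P y : ℕ} (h1 : ∀ p < y, 2 ≤ p → Nat.gcd P p ≠ 1)
    (h2 : P ∣ Nat.factorial (y - 1)) (p : ℕ) (hp : p.Prime) : p ∣ P ↔ p < y := by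
  constructor
  · intro h
    have := (hp.dvd_factorial).1 (h.trans h2)
    have := hp.two_le
    omega
  · intro h
    by_contra hd
    exact h1 p h hp.two_le (Nat.Coprime.symm ((Nat.Prime.coprime_iff_not_dvd hp).2 hd))

/-- The product of the primes below `29`. -/
abbrev primorial29 : ℕ := 223092870

/-- The product of the primes below `839`. -/
abbrev primorial839 : ℕ :=
  142362238228530100452472381012661049227615306041135602384311390729360372764398484807850162334772744087639904828171073665317251138229836528744776306701510012867123622953617400216516063525928797867671746561075462131223619055896753987425733020493817354699720874919856024320172639141643003249457566363448724516405175975846007180969981634156237646125410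

lemma prime_dvd_primorial29 (p : ℕ) (hp : p.Prime) : p ∣ primorial29 ↔ p < 29 :=
  prime_dvd_iff_lt (by decide +kernel) (by decide +kernel) p hp

set_option maxRecDepth 10000 in
lemma prime_dvd_primorial839 (p : ℕ) (hp : p.Prime) : p ∣ primorial839 ↔ p < 839 :=
  prime_dvd_iff_lt (by decide +kernel) (by decide +kernel) p hp

/-- On `[a, b)` the inequality `2 π(n) ≤ π(3n) + 2` follows from its extreme case, by
monotonicity. -/
lemma two_mul_pi_le_of_mem_Ico {a b c s t : ℕ} (hb : Nat.primeCounting' b = s)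
    (hc : Nat.primeCounting' c = t) (hca : c = 3 * a) (h : 2 * s ≤ t + 2) {n : ℕ}
    (h1 : a ≤ n) (h2 : n < b) :
    2 * Nat.primeCounting n ≤ Nat.primeCounting (3 * n) + 2 := by
  have e1 : Nat.primeCounting n ≤ Nat.primeCounting' b := Nat.monotone_primeCounting' h2
  have e2 : Nat.primeCounting' c ≤ Nat.primeCounting (3 * n) :=
    Nat.monotone_primeCounting' (by omega : c ≤ 3 * n + 1)
  omega

/-- The inequality `2 π(n) ≤ π(3n) + 2` in the range not covered by Chebyshev's estimates. -/
lemma two_mul_pi_le_of_lt {n : ℕ} (h5 : 5 ≤ n) (hn : n < 328171) :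
    2 * Nat.primeCounting n ≤ Nat.primeCounting (3 * n) + 2 := by
  -- If `a` and `b` are consecutive interval endpoints, then `2 π'(b) ≤ π'(3a) + 2`, which settles
  -- `[a, b)`; the table holds `π'` at the endpoints `b` and at the points `3a`.
  have v47 : Nat.primeCounting' 47 = 14 := by decide +kernel
  have v67 : Nat.primeCounting' 67 = 18 :=
    primeCounting'_step prime_dvd_primorial29 (by norm_num) 4 v47 (by decide +kernel) (by decide +kernel)
  have v97 : Nat.primeCounting' 97 = 24 :=
    primeCounting'_step prime_dvd_primorial29 (by norm_num) 4 v67 (by decide +kernel) (by decide +kernel)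
  have v131 : Nat.primeCounting' 131 = 31 :=
    primeCounting'_step prime_dvd_primorial29 (by norm_num) 5 v97 (by decide +kernel) (by decide +kernel)
  have v141 : Nat.primeCounting' 141 = 34 :=
    primeCounting'_step prime_dvd_primorial29 (by norm_num) 3 v131 (by decide +kernel) (by decide +kernel)
  have v173 : Nat.primeCounting' 173 = 39 :=
    primeCounting'_step prime_dvd_primorial29 (by norm_num) 4 v141 (by decide +kernel) (by decide +kernel)
  have v201 : Nat.primeCounting' 201 = 46 :=
    primeCounting'_step prime_dvd_primorial29 (by norm_num) 4 v173 (by decide +kernel) (by decide +kernel)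
  have v229 : Nat.primeCounting' 229 = 49 :=
    primeCounting'_step prime_dvd_primorial29 (by norm_num) 4 v201 (by decide +kernel) (by decide +kernel)
  have v291 : Nat.primeCounting' 291 = 61 :=
    primeCounting'_step prime_dvd_primorial29 (by norm_num) 5 v229 (by decide +kernel) (by decide +kernel)
  have v389 : Nat.primeCounting' 389 = 76 :=
    primeCounting'_step prime_dvd_primorial29 (by norm_num) 6 v291 (by decide +kernel) (by decide +kernel)
  have v393 : Nat.primeCounting' 393 = 77 :=
    primeCounting'_step prime_dvd_primorial29 (by norm_num) 1 v389 (by decide +kernel) (by decide +kernel)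
  have v519 : Nat.primeCounting' 519 = 97 :=
    primeCounting'_step prime_dvd_primorial29 (by norm_num) 6 v393 (by decide +kernel) (by decide +kernel)
  have v683 : Nat.primeCounting' 683 = 123 :=
    primeCounting'_step prime_dvd_primorial29 (by norm_num) 7 v519 (by decide +kernel) (by decide +kernel)
  have v687 : Nat.primeCounting' 687 = 124 :=
    primeCounting'_step prime_dvd_primorial29 (by norm_num) 1 v683 (by decide +kernel) (by decide +kernel)
  have v839 : Nat.primeCounting' 839 = 145 :=
    primeCounting'_step prime_dvd_primorial29 (by norm_num) 7 v687 (by decide +kernel) (by decide +kernel)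
  have v873 : Nat.primeCounting' 873 = 150 :=
    primeCounting'_step prime_dvd_primorial839 (by norm_num) 5 v839 (by decide +kernel) (by decide +kernel)
  have v1163 : Nat.primeCounting' 1163 = 191 :=
    primeCounting'_step prime_dvd_primorial839 (by norm_num) 8 v873 (by decide +kernel) (by decide +kernel)
  have v1167 : Nat.primeCounting' 1167 = 192 :=
    primeCounting'_step prime_dvd_primorial839 (by norm_num) 1 v1163 (by decide +kernel) (by decide +kernel)
  have v1553 : Nat.primeCounting' 1553 = 244 :=
    primeCounting'_step prime_dvd_primorial839 (by norm_num) 8 v1167 (by decide +kernel) (by decide +kernel)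
  have v1557 : Nat.primeCounting' 1557 = 245 :=
    primeCounting'_step prime_dvd_primorial839 (by norm_num) 1 v1553 (by decide +kernel) (by decide +kernel)
  have v2049 : Nat.primeCounting' 2049 = 309 :=
    primeCounting'_step prime_dvd_primorial839 (by norm_num) 8 v1557 (by decide +kernel) (by decide +kernel)
  have v2619 : Nat.primeCounting' 2619 = 380 :=
    primeCounting'_step prime_dvd_primorial839 (by norm_num) 9 v2049 (by decide +kernel) (by decide +kernel)
  have v3489 : Nat.primeCounting' 3489 = 487 :=
    primeCounting'_step prime_dvd_primorial839 (by norm_num) 9 v2619 (by decide +kernel) (by decide +kernel)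
  have v4659 : Nat.primeCounting' 4659 = 630 :=
    primeCounting'_step prime_dvd_primorial839 (by norm_num) 10 v3489 (by decide +kernel) (by decide +kernel)
  have v6147 : Nat.primeCounting' 6147 = 801 :=
    primeCounting'_step prime_dvd_primorial839 (by norm_num) 10 v4659 (by decide +kernel) (by decide +kernel)
  have v7857 : Nat.primeCounting' 7857 = 992 :=
    primeCounting'_step prime_dvd_primorial839 (by norm_num) 10 v6147 (by decide +kernel) (by decide +kernel)
  have v10467 : Nat.primeCounting' 10467 = 1281 :=
    primeCounting'_step prime_dvd_primorial839 (by norm_num) 11 v7857 (by decide +kernel) (by decide +kernel)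
  have v13977 : Nat.primeCounting' 13977 = 1650 :=
    primeCounting'_step prime_dvd_primorial839 (by norm_num) 11 v10467 (by decide +kernel) (by decide +kernel)
  have v18441 : Nat.primeCounting' 18441 = 2112 :=
    primeCounting'_step prime_dvd_primorial839 (by norm_num) 12 v13977 (by decide +kernel) (by decide +kernel)
  have v23571 : Nat.primeCounting' 23571 = 2622 :=
    primeCounting'_step prime_dvd_primorial839 (by norm_num) 12 v18441 (by decide +kernel) (by decide +kernel)
  have v31401 : Nat.primeCounting' 31401 = 3385 :=
    primeCounting'_step prime_dvd_primorial839 (by norm_num) 12 v23571 (by decide +kernel) (by decide +kernel)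
  have v41931 : Nat.primeCounting' 41931 = 4383 :=
    primeCounting'_step prime_dvd_primorial839 (by norm_num) 13 v31401 (by decide +kernel) (by decide +kernel)
  have v55323 : Nat.primeCounting' 55323 = 5617 :=
    primeCounting'_step prime_dvd_primorial839 (by norm_num) 13 v41931 (by decide +kernel) (by decide +kernel)
  have v70713 : Nat.primeCounting' 70713 = 7004 :=
    primeCounting'_step prime_dvd_primorial839 (by norm_num) 13 v55323 (by decide +kernel) (by decide +kernel)
  have v94203 : Nat.primeCounting' 94203 = 9086 :=
    primeCounting'_step prime_dvd_primorial839 (by norm_num) 14 v70713 (by decide +kernel) (by decide +kernel)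
  have v125793 : Nat.primeCounting' 125793 = 11804 :=
    primeCounting'_step prime_dvd_primorial839 (by norm_num) 14 v94203 (by decide +kernel) (by decide +kernel)
  have v165969 : Nat.primeCounting' 165969 = 15172 :=
    primeCounting'_step prime_dvd_primorial839 (by norm_num) 15 v125793 (by decide +kernel) (by decide +kernel)
  have v212139 : Nat.primeCounting' 212139 = 18985 :=
    primeCounting'_step prime_dvd_primorial839 (by norm_num) 15 v165969 (by decide +kernel) (by decide +kernel)
  have v233231 : Nat.primeCounting' 233231 = 20689 :=
    primeCounting'_step prime_dvd_primorial839 (by norm_num) 14 v212139 (by decide +kernel) (by decide +kernel)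
  have v282609 : Nat.primeCounting' 282609 = 24650 :=
    primeCounting'_step prime_dvd_primorial839 (by norm_num) 15 v233231 (by decide +kernel) (by decide +kernel)
  have v328171 : Nat.primeCounting' 328171 = 28263 :=
    primeCounting'_step prime_dvd_primorial839 (by norm_num) 15 v282609 (by decide +kernel) (by decide +kernel)
  have v377379 : Nat.primeCounting' 377379 = 32097 :=
    primeCounting'_step prime_dvd_primorial839 (by norm_num) 15 v328171 (by decide +kernel) (by decide +kernel)
  have v497907 : Nat.primeCounting' 497907 = 41377 :=
    primeCounting'_step prime_dvd_primorial839 (by norm_num) 16 v377379 (by decide +kernel) (by decide +kernel)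
  have v699693 : Nat.primeCounting' 699693 = 56525 :=
    primeCounting'_step prime_dvd_primorial839 (by norm_num) 17 v497907 (by decide +kernel) (by decide +kernel)
  rcases Nat.lt_or_ge n 47 with h | h
  · have small : ∀ m < 47, 5 ≤ m →
        2 * Nat.primeCounting m ≤ Nat.primeCounting (3 * m) + 2 := by decide +kernel
    exact small n h h5
  rcases Nat.lt_or_ge n 67 with h' | h'
  · exact two_mul_pi_le_of_mem_Ico v67 v141 rfl (by norm_num) h h'
  clear h; rename' h' => h
  rcases Nat.lt_or_ge n 97 with h' | h'
  · exact two_mul_pi_le_of_mem_Ico v97 v201 rfl (by norm_num) h h'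
  clear h; rename' h' => h
  rcases Nat.lt_or_ge n 131 with h' | h'
  · exact two_mul_pi_le_of_mem_Ico v131 v291 rfl (by norm_num) h h'
  clear h; rename' h' => h
  rcases Nat.lt_or_ge n 173 with h' | h'
  · exact two_mul_pi_le_of_mem_Ico v173 v393 rfl (by norm_num) h h'
  clear h; rename' h' => h
  rcases Nat.lt_or_ge n 229 with h' | h'
  · exact two_mul_pi_le_of_mem_Ico v229 v519 rfl (by norm_num) h h'
  clear h; rename' h' => h
  rcases Nat.lt_or_ge n 291 with h' | h'
  · exact two_mul_pi_le_of_mem_Ico v291 v687 rfl (by norm_num) h h'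
  clear h; rename' h' => h
  rcases Nat.lt_or_ge n 389 with h' | h'
  · exact two_mul_pi_le_of_mem_Ico v389 v873 rfl (by norm_num) h h'
  clear h; rename' h' => h
  rcases Nat.lt_or_ge n 519 with h' | h'
  · exact two_mul_pi_le_of_mem_Ico v519 v1167 rfl (by norm_num) h h'
  clear h; rename' h' => h
  rcases Nat.lt_or_ge n 683 with h' | h'
  · exact two_mul_pi_le_of_mem_Ico v683 v1557 rfl (by norm_num) h h'
  clear h; rename' h' => h
  rcases Nat.lt_or_ge n 873 with h' | h'
  · exact two_mul_pi_le_of_mem_Ico v873 v2049 rfl (by norm_num) h h'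
  clear h; rename' h' => h
  rcases Nat.lt_or_ge n 1163 with h' | h'
  · exact two_mul_pi_le_of_mem_Ico v1163 v2619 rfl (by norm_num) h h'
  clear h; rename' h' => h
  rcases Nat.lt_or_ge n 1553 with h' | h'
  · exact two_mul_pi_le_of_mem_Ico v1553 v3489 rfl (by norm_num) h h'
  clear h; rename' h' => h
  rcases Nat.lt_or_ge n 2049 with h' | h'
  · exact two_mul_pi_le_of_mem_Ico v2049 v4659 rfl (by norm_num) h h'
  clear h; rename' h' => h
  rcases Nat.lt_or_ge n 2619 with h' | h'
  · exact two_mul_pi_le_of_mem_Ico v2619 v6147 rfl (by norm_num) h h'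
  clear h; rename' h' => h
  rcases Nat.lt_or_ge n 3489 with h' | h'
  · exact two_mul_pi_le_of_mem_Ico v3489 v7857 rfl (by norm_num) h h'
  clear h; rename' h' => h
  rcases Nat.lt_or_ge n 4659 with h' | h'
  · exact two_mul_pi_le_of_mem_Ico v4659 v10467 rfl (by norm_num) h h'
  clear h; rename' h' => h
  rcases Nat.lt_or_ge n 6147 with h' | h'
  · exact two_mul_pi_le_of_mem_Ico v6147 v13977 rfl (by norm_num) h h'
  clear h; rename' h' => h
  rcases Nat.lt_or_ge n 7857 with h' | h'
  · exact two_mul_pi_le_of_mem_Ico v7857 v18441 rfl (by norm_num) h h'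
  clear h; rename' h' => h
  rcases Nat.lt_or_ge n 10467 with h' | h'
  · exact two_mul_pi_le_of_mem_Ico v10467 v23571 rfl (by norm_num) h h'
  clear h; rename' h' => h
  rcases Nat.lt_or_ge n 13977 with h' | h'
  · exact two_mul_pi_le_of_mem_Ico v13977 v31401 rfl (by norm_num) h h'
  clear h; rename' h' => h
  rcases Nat.lt_or_ge n 18441 with h' | h'
  · exact two_mul_pi_le_of_mem_Ico v18441 v41931 rfl (by norm_num) h h'
  clear h; rename' h' => h
  rcases Nat.lt_or_ge n 23571 with h' | h'
  · exact two_mul_pi_le_of_mem_Ico v23571 v55323 rfl (by norm_num) h h'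
  clear h; rename' h' => h
  rcases Nat.lt_or_ge n 31401 with h' | h'
  · exact two_mul_pi_le_of_mem_Ico v31401 v70713 rfl (by norm_num) h h'
  clear h; rename' h' => h
  rcases Nat.lt_or_ge n 41931 with h' | h'
  · exact two_mul_pi_le_of_mem_Ico v41931 v94203 rfl (by norm_num) h h'
  clear h; rename' h' => h
  rcases Nat.lt_or_ge n 55323 with h' | h'
  · exact two_mul_pi_le_of_mem_Ico v55323 v125793 rfl (by norm_num) h h'
  clear h; rename' h' => h
  rcases Nat.lt_or_ge n 70713 with h' | h'
  · exact two_mul_pi_le_of_mem_Ico v70713 v165969 rfl (by norm_num) h h'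
  clear h; rename' h' => h
  rcases Nat.lt_or_ge n 94203 with h' | h'
  · exact two_mul_pi_le_of_mem_Ico v94203 v212139 rfl (by norm_num) h h'
  clear h; rename' h' => h
  rcases Nat.lt_or_ge n 125793 with h' | h'
  · exact two_mul_pi_le_of_mem_Ico v125793 v282609 rfl (by norm_num) h h'
  clear h; rename' h' => h
  rcases Nat.lt_or_ge n 165969 with h' | h'
  · exact two_mul_pi_le_of_mem_Ico v165969 v377379 rfl (by norm_num) h h'
  clear h; rename' h' => h
  rcases Nat.lt_or_ge n 233231 with h' | h'
  · exact two_mul_pi_le_of_mem_Ico v233231 v497907 rfl (by norm_num) h h'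
  clear h; rename' h' => h
  exact two_mul_pi_le_of_mem_Ico v328171 v699693 rfl (by norm_num) h hn

/-! ### Chebyshev's combination of factorials -/

/-- Chebyshev's combination of factorials,
`log (N! ⌊N/30⌋! / (⌊N/2⌋! ⌊N/3⌋! ⌊N/5⌋!))`. -/
noncomputable def chebyshevLog (N : ℕ) : ℝ :=
  Real.log (N.factorial) + Real.log ((N / 30).factorial) - Real.log ((N / 2).factorial)
    - Real.log ((N / 3).factorial) - Real.log ((N / 5).factorial)

/-- Legendre's formula, summed over all primes. -/
lemma log_factorial_eq_sum (M N : ℕ) (h : N ≤ M) : Real.log (N.factorial) =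
    ∑ m ∈ Finset.Ioc 0 M, ArithmeticFunction.vonMangoldt m * ((N / m : ℕ) : ℝ) := by
  induction N with
  | zero => simp
  | succ N ih =>
    rw [Nat.factorial_succ, Nat.cast_mul,
      Real.log_mul (by positivity) (by positivity), ih (by omega),
      ← ArithmeticFunction.vonMangoldt_sum]
    have hdiv : (N + 1).divisors = (Finset.Ioc 0 M).filter (· ∣ N + 1) := by
      ext d
      simp only [Nat.mem_divisors, Finset.mem_filter, Finset.mem_Ioc]
      constructor
      · rintro ⟨h1, -⟩
        exact ⟨⟨Nat.pos_of_dvd_of_pos h1 (by omega), (Nat.le_of_dvd (by omega) h1).trans h⟩, h1⟩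
      · rintro ⟨-, h1⟩
        exact ⟨h1, by omega⟩
    rw [hdiv, Finset.sum_filter, ← Finset.sum_add_distrib]
    refine Finset.sum_congr rfl fun m _ => ?_
    rw [Nat.succ_div]
    split_ifs <;> push_cast <;> ring

lemma chebyshevLog_eq_sum (N : ℕ) : chebyshevLog N =
    ∑ m ∈ Finset.Ioc 0 N, ArithmeticFunction.vonMangoldt m *
      (((N / m : ℕ) : ℝ) + ((N / m / 30 : ℕ) : ℝ) - ((N / m / 2 : ℕ) : ℝ)
        - ((N / m / 3 : ℕ) : ℝ) - ((N / m / 5 : ℕ) : ℝ)) := by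
  have key : ∀ d : ℕ, Real.log ((N / d).factorial) =
      ∑ m ∈ Finset.Ioc 0 N, ArithmeticFunction.vonMangoldt m * ((N / m / d : ℕ) : ℝ) := by
    intro d
    rw [log_factorial_eq_sum N (N / d) (Nat.div_le_self _ _)]
    refine Finset.sum_congr rfl fun m _ => ?_
    rw [Nat.div_div_eq_div_mul, Nat.div_div_eq_div_mul, mul_comm d m]
  rw [chebyshevLog, key, key, key, key, log_factorial_eq_sum N N le_rfl,
    ← Finset.sum_add_distrib, ← Finset.sum_sub_distrib, ← Finset.sum_sub_distrib,
    ← Finset.sum_sub_distrib]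
  refine Finset.sum_congr rfl fun m _ => ?_
  ring

/-- The coefficient of `Λ m` in `chebyshevLog` is at most `1`. -/
lemma chebyshevLog_le_psi (N : ℕ) : chebyshevLog N ≤ Chebyshev.psi N := by
  rw [chebyshevLog_eq_sum, Chebyshev.psi, Nat.floor_natCast]
  refine Finset.sum_le_sum fun m _ => ?_
  refine mul_le_of_le_one_right ArithmeticFunction.vonMangoldt_nonneg ?_
  have h : N / m + N / m / 30 ≤ N / m / 2 + N / m / 3 + N / m / 5 + 1 := by omega
  have h' : ((N / m : ℕ) : ℝ) + ((N / m / 30 : ℕ) : ℝ) ≤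
      ((N / m / 2 : ℕ) : ℝ) + ((N / m / 3 : ℕ) : ℝ) + ((N / m / 5 : ℕ) : ℝ) + 1 := by
    exact_mod_cast h
  linarith

/-- The coefficient of `Λ m` in `chebyshevLog` is nonnegative, and it equals `1` for
`N / 6 < m ≤ N`. -/
lemma theta_le_theta_add_chebyshevLog (N : ℕ) :
    Chebyshev.theta N ≤ Chebyshev.theta (N / 6 : ℕ) + chebyshevLog N := by
  rw [chebyshevLog_eq_sum, Chebyshev.theta, Chebyshev.theta, Nat.floor_natCast,
    Nat.floor_natCast, Finset.sum_filter, Finset.sum_filter]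
  have hsub : Finset.Ioc 0 (N / 6) ⊆ Finset.Ioc 0 N :=
    Finset.Ioc_subset_Ioc_right (Nat.div_le_self _ _)
  have hext : ∑ p ∈ Finset.Ioc 0 (N / 6), (if p.Prime then Real.log p else 0) =
      ∑ p ∈ Finset.Ioc 0 N, if p ≤ N / 6 then (if p.Prime then Real.log p else 0) else 0 := by
    rw [← Finset.sum_filter (fun p => p ≤ N / 6)]
    refine Finset.sum_congr ?_ fun _ _ => rfl
    ext p
    simp only [Finset.mem_filter, Finset.mem_Ioc]
    omega
  rw [hext, ← Finset.sum_add_distrib]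
  refine Finset.sum_le_sum fun m hm => ?_
  rw [Finset.mem_Ioc] at hm
  have hΛ : 0 ≤ ArithmeticFunction.vonMangoldt m := ArithmeticFunction.vonMangoldt_nonneg
  by_cases h6 : m ≤ N / 6
  · rw [if_pos h6]
    refine le_add_of_nonneg_right (mul_nonneg hΛ ?_)
    have h : N / m / 2 + N / m / 3 + N / m / 5 ≤ N / m + N / m / 30 := by omega
    have h' : ((N / m / 2 : ℕ) : ℝ) + ((N / m / 3 : ℕ) : ℝ) + ((N / m / 5 : ℕ) : ℝ) ≤
        ((N / m : ℕ) : ℝ) + ((N / m / 30 : ℕ) : ℝ) := by exact_mod_cast h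
    linarith
  · rw [if_neg h6, zero_add]
    have hq1 : 1 ≤ N / m := (Nat.one_le_div_iff hm.1).2 hm.2
    have hq2 : N / m < 6 := by
      rw [Nat.div_lt_iff_lt_mul hm.1]
      omega
    have h : N / m + N / m / 30 = N / m / 2 + N / m / 3 + N / m / 5 + 1 := by omega
    have h' : ((N / m : ℕ) : ℝ) + ((N / m / 30 : ℕ) : ℝ) =
      ((N / m / 2 : ℕ) : ℝ) + ((N / m / 3 : ℕ) : ℝ) + ((N / m / 5 : ℕ) : ℝ) + 1 := by
      exact_mod_cast h
    have hc : ((N / m : ℕ) : ℝ) + ((N / m / 30 : ℕ) : ℝ) - ((N / m / 2 : ℕ) : ℝ)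
        - ((N / m / 3 : ℕ) : ℝ) - ((N / m / 5 : ℕ) : ℝ) = 1 := by linarith
    rw [hc, mul_one]
    split_ifs with hp
    · rw [ArithmeticFunction.vonMangoldt_apply_prime hp]
    · exact hΛ

/-- `log (1 + 1 / k)` lies between `1 / (k + 1)` and `1 / k`. -/
lemma log_succ_sub_log_bounds {k : ℕ} (hk : 1 ≤ k) :
    1 ≤ (k + 1 : ℝ) * (Real.log (k + 1) - Real.log k) ∧
      (k : ℝ) * (Real.log (k + 1) - Real.log k) ≤ 1 := by
  have h0 : (0 : ℝ) < k := by exact_mod_cast hk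
  have h1 : (0 : ℝ) < k + 1 := by positivity
  rw [← Real.log_div h1.ne' h0.ne']
  constructor
  · have := Real.one_sub_inv_le_log_of_pos (div_pos h1 h0)
    rw [inv_div] at this
    have := mul_le_mul_of_nonneg_left this h1.le
    refine le_trans (le_of_eq ?_) this
    field_simp
    ring
  · have := Real.log_le_sub_one_of_pos (div_pos h1 h0)
    have := mul_le_mul_of_nonneg_left this h0.le
    refine this.trans (le_of_eq ?_)
    field_simp
    ring

lemma log_factorial_bounds {k : ℕ} (hk : 1 ≤ k) :
    (k : ℝ) * Real.log k - k + 1 ≤ Real.log k.factorial ∧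
      Real.log k.factorial ≤ (k + 1 : ℝ) * Real.log k - k + 1 := by
  induction k, hk using Nat.le_induction with
  | base => simp
  | succ k hk ih =>
    obtain ⟨h1, h2⟩ := log_succ_sub_log_bounds hk
    rw [Nat.factorial_succ, Nat.cast_mul, Real.log_mul (by positivity) (by positivity)]
    push_cast
    constructor <;> nlinarith [ih.1, ih.2]

/-- `t log t - t` is increasing on `[1, ∞)`. -/
lemma mul_log_sub_self_le {s t : ℝ} (hs : 1 ≤ s) (hst : s ≤ t) :
    s * Real.log s - s ≤ t * Real.log t - t := by
  have hs0 : 0 < s := by linarith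
  have ht0 : 0 < t := by linarith
  have h := Real.one_sub_inv_le_log_of_pos (div_pos ht0 hs0)
  rw [inv_div, Real.log_div ht0.ne' hs0.ne'] at h
  have h' := mul_le_mul_of_nonneg_left h ht0.le
  have e : t * (1 - s / t) = t - s := by field_simp
  rw [e] at h'
  nlinarith [Real.log_nonneg hs]

/-- Stirling's formula for `⌊N / d⌋!`, with a logarithmic error term. -/
lemma log_factorial_div_bounds {N d : ℕ} (hd : 1 ≤ d) (hN : d ≤ N) :
    (N / d : ℝ) * (Real.log N - Real.log d) - N / d - (Real.log N - Real.log d)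
        ≤ Real.log (N / d).factorial ∧
      Real.log (N / d).factorial ≤
        (N / d : ℝ) * (Real.log N - Real.log d) - N / d + (Real.log N - Real.log d) + 1 := by
  have hd0 : (0 : ℝ) < d := by exact_mod_cast hd
  have hN0 : (0 : ℝ) < N := by exact_mod_cast hd.trans hN
  rw [← Real.log_div hN0.ne' hd0.ne']
  have hk : 1 ≤ N / d := (Nat.one_le_div_iff hd).2 hN
  have hk' : (1 : ℝ) ≤ ((N / d : ℕ) : ℝ) := by exact_mod_cast hk
  have hle : ((N / d : ℕ) : ℝ) ≤ (N : ℝ) / d := Nat.cast_div_le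
  have hlt : (N : ℝ) / d < ((N / d : ℕ) : ℝ) + 1 := by
    rw [div_lt_iff₀ hd0]
    exact_mod_cast (Nat.div_lt_iff_lt_mul hd).1 (Nat.lt_succ_self (N / d))
  set k := N / d with hkdef
  set t := (N : ℝ) / d with ht
  have ht1 : 1 ≤ t := hk'.trans hle
  constructor
  · have h1 := (log_factorial_bounds (k := k + 1) (by omega)).1
    rw [Nat.factorial_succ, Nat.cast_mul, Real.log_mul (by positivity) (by positivity)] at h1
    push_cast at h1
    have h2 := mul_log_sub_self_le ht1 hlt.le
    have h3 : Real.log (k + 1) ≤ Real.log t + Real.log 2 := by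
      rw [← Real.log_mul (by positivity) (by norm_num)]
      exact Real.log_le_log (by positivity) (by linarith)
    have := Real.log_two_lt_d9
    linarith
  · have h1 := (log_factorial_bounds hk).2
    have h2 := mul_log_sub_self_le hk' hle
    have h3 : Real.log k ≤ Real.log t := Real.log_le_log (by positivity) hle
    linarith

/-- Chebyshev's constant
`A = (log 2) / 2 + (log 3) / 3 + (log 5) / 5 - (log 30) / 30 = 0.92129…`. -/
noncomputable def chebyshevConst : ℝ :=
  Real.log 2 * (7 / 15) + Real.log 3 * (3 / 10) + Real.log 5 * (1 / 6)

lemma chebyshevConst_bounds : 0.92129 < chebyshevConst ∧ chebyshevConst < 0.9213 := by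
  have := Real.log_two_gt_d9
  have := Real.log_two_lt_d9
  have := Real.log_three_gt_d9
  have := Real.log_three_lt_d9
  have := Real.log_five_gt_d9
  have := Real.log_five_lt_d9
  unfold chebyshevConst
  constructor <;> norm_num at * <;> linarith

lemma chebyshevLog_bounds {N : ℕ} (hN : 30 ≤ N) :
    chebyshevConst * N - 5 * Real.log N ≤ chebyshevLog N ∧
      chebyshevLog N ≤ chebyshevConst * N + 5 * Real.log N := by
  have h1 := log_factorial_div_bounds (N := N) (d := 1) le_rfl (by omega)
  have h2 := log_factorial_div_bounds (N := N) (d := 2) (by norm_num) (by omega)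
  have h3 := log_factorial_div_bounds (N := N) (d := 3) (by norm_num) (by omega)
  have h5 := log_factorial_div_bounds (N := N) (d := 5) (by norm_num) (by omega)
  have h30 := log_factorial_div_bounds (N := N) (d := 30) (by norm_num) (by omega)
  have e30 : Real.log (30 : ℝ) = Real.log 2 + Real.log 3 + Real.log 5 := by
    rw [← Real.log_mul (by norm_num) (by norm_num), ← Real.log_mul (by norm_num) (by norm_num)]
    norm_num
  have l2 := Real.log_two_gt_d9
  have l3 := Real.log_three_gt_d9
  have l5 := Real.log_five_gt_d9
  have hd : N / 1 = N := Nat.div_one N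
  rw [hd] at h1
  push_cast at h1 h2 h3 h5 h30
  rw [Real.log_one] at h1
  rw [e30] at h30
  unfold chebyshevLog chebyshevConst
  generalize Real.log N = L at *
  constructor
  · nlinarith [h1.1, h2.2, h3.2, h5.2, h30.1]
  · nlinarith [h1.2, h2.1, h3.1, h5.1, h30.2]

/-! ### Bounds for `θ` and `π` -/

/-- The tangent to the logarithm at `M` lies above it. -/
lemma log_le_div_add_log {M x : ℝ} (hM : 0 < M) (hx : 0 < x) :
    Real.log x ≤ x / M + Real.log M - 1 := by
  have := Real.log_le_sub_one_of_pos (div_pos hx hM)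
  rw [Real.log_div hx.ne' hM.ne'] at this
  linarith

/-- Two steps of Chebyshev's descent `N ↦ N / 6`, followed by `θ(x) ≤ x log 4`, give a constant
`7A/6 + (log 4)/36 < 1.1134`; the logarithmic errors are absorbed in `0.005 N + 70`. -/
lemma theta_le_linear {N : ℕ} (hN : 180 ≤ N) :
    Chebyshev.theta N ≤ 1.12 * N + 70 := by
  have t1 := theta_le_theta_add_chebyshevLog N
  have t2 := theta_le_theta_add_chebyshevLog (N / 6)
  have c1 := (chebyshevLog_bounds (N := N) (by omega)).2
  have c2 := (chebyshevLog_bounds (N := N / 6) (by omega)).2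
  have t3 := Chebyshev.theta_le_log4_mul_x (x := ((N / 6 / 6 : ℕ) : ℝ)) (by positivity)
  have hN0 : (0 : ℝ) < N := by exact_mod_cast (by omega : 0 < N)
  have d1 : ((N / 6 : ℕ) : ℝ) ≤ (N : ℝ) / 6 := by exact_mod_cast Nat.cast_div_le (α := ℝ)
  have d2 : ((N / 6 / 6 : ℕ) : ℝ) ≤ (N : ℝ) / 36 := by
    rw [Nat.div_div_eq_div_mul]
    exact_mod_cast Nat.cast_div_le (α := ℝ)
  have hl : Real.log ((N / 6 : ℕ) : ℝ) ≤ Real.log N :=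
    Real.log_le_log (by exact_mod_cast (by omega : 0 < N / 6)) (by linarith)
  have e4 : Real.log (4 : ℝ) = 2 * Real.log 2 := by
    rw [show (4 : ℝ) = 2 ^ 2 by norm_num, Real.log_pow]
    norm_num
  have e2000 : Real.log (2000 : ℝ) = 4 * Real.log 2 + 3 * Real.log 5 := by
    rw [show (2000 : ℝ) = 2 ^ 4 * 5 ^ 3 by norm_num,
      Real.log_mul (by norm_num) (by norm_num), Real.log_pow, Real.log_pow]
    norm_num
  have hlog := log_le_div_add_log (M := 2000) (by norm_num) hN0
  have l2 := Real.log_two_lt_d9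
  have l5 := Real.log_five_lt_d9
  have hA := chebyshevConst_bounds.2
  have hA0 : 0 ≤ chebyshevConst := by linarith [chebyshevConst_bounds.1]
  have m1 : chebyshevConst * N ≤ 0.9213 * N := by gcongr
  have m2 : chebyshevConst * ((N / 6 : ℕ) : ℝ) ≤ 0.9213 * (N / 6) := by gcongr
  have m3 : Real.log 4 * ((N / 6 / 6 : ℕ) : ℝ) ≤ 1.38630 * (N / 36) := by
    gcongr
    linarith
  linarith

lemma log_3000_gt : (8.006 : ℝ) < Real.log 3000 := by
  have e : Real.log (3000 : ℝ) = 3 * Real.log 2 + Real.log 3 + 3 * Real.log 5 := by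
    rw [show (3000 : ℝ) = 2 ^ 3 * 3 * 5 ^ 3 by norm_num,
      Real.log_mul (by norm_num) (by norm_num), Real.log_mul (by norm_num) (by norm_num),
      Real.log_pow, Real.log_pow]
    norm_num
  have := Real.log_two_gt_d9
  have := Real.log_three_gt_d9
  have := Real.log_five_gt_d9
  rw [e]
  norm_num at *
  linarith

lemma primeCounting_3000 : Nat.primeCounting 3000 = 430 := by
  have v47 : Nat.primeCounting' 47 = 14 := by decide +kernel
  have v839 : Nat.primeCounting' 839 = 145 :=
    primeCounting'_step prime_dvd_primorial29 (by norm_num) 9 v47 (by decide +kernel)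
      (by decide +kernel)
  exact primeCounting'_step prime_dvd_primorial839 (by norm_num) 11 v839 (by decide +kernel)
      (by decide +kernel)

/-- The discrete form of `1.12 / log² t ≤ (d/dt) (1.5 t / log² t)`, with
`a = log n`, `c = log (n + 1)`. -/
lemma partial_summation_step {n a c : ℝ} (hn : 3000 ≤ n) (ha : 8.006 < a)
    (h1 : 1 ≤ (n + 1) * (c - a)) (h2 : n * (c - a) ≤ 1) :
    1.12 * n * (1 / a - 1 / c) ≤ 1.5 * (n + 1) / c ^ 2 - 1.5 * n / a ^ 2 := by
  have hca : a < c := by nlinarith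
  have hc0 : 0 < c := by linarith
  have ha0 : 0 < a := by linarith
  have hca' : c - a ≤ 1 / 3000 := by nlinarith
  have e : 1.5 * (n + 1) / c ^ 2 - 1.5 * n / a ^ 2 - 1.12 * n * (1 / a - 1 / c) =
      (1.5 * (a ^ 2 - (n * (c - a)) * (c + a)) - 1.12 * (n * (c - a)) * (a * c))
        / (a ^ 2 * c ^ 2) := by
    field_simp
    ring
  have hnum : 0 ≤ 1.5 * (a ^ 2 - (n * (c - a)) * (c + a))
      - 1.12 * (n * (c - a)) * (a * c) := by
    have p1 : (n * (c - a)) * (c + a) ≤ 1 * (c + a) := by gcongr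
    have p2 : (n * (c - a)) * (a * c) ≤ 1 * (a * c) := by gcongr
    nlinarith
  have := div_nonneg hnum (by positivity : 0 ≤ a ^ 2 * c ^ 2)
  rw [← e] at this
  linarith

lemma theta_succ (n : ℕ) : Chebyshev.theta ((n + 1 : ℕ) : ℝ) =
    Chebyshev.theta n + if (n + 1).Prime then Real.log ((n : ℝ) + 1) else 0 := by
  rw [Chebyshev.theta, Chebyshev.theta, Nat.floor_natCast, Nat.floor_natCast,
    Finset.sum_filter, Finset.sum_filter, Finset.sum_Ioc_succ_top (Nat.zero_le n)]
  push_cast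
  rfl

/-- Partial summation: since `θ(t) ≤ 1.12 t + 70`, replacing `log p` by `log n` costs at most
`1.5 n / log² n`, up to a constant. -/
lemma pi_le_theta_div_log {n : ℕ} (hn : 3000 ≤ n) :
    (Nat.primeCounting n : ℝ) ≤ Chebyshev.theta n / Real.log n
      + 1.5 * n / Real.log n ^ 2 + 440 - 70 / Real.log n := by
  induction n, hn using Nat.le_induction with
  | base =>
    have hl := log_3000_gt
    rw [primeCounting_3000]
    have h1 : 0 ≤ Chebyshev.theta ((3000 : ℕ) : ℝ) / Real.log ((3000 : ℕ) : ℝ) :=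
      div_nonneg (Chebyshev.theta_nonneg _) (Real.log_natCast_nonneg _)
    have h2 : 0 ≤ 1.5 * ((3000 : ℕ) : ℝ) / Real.log ((3000 : ℕ) : ℝ) ^ 2 := by positivity
    have h3 : 70 / Real.log ((3000 : ℕ) : ℝ) ≤ 10 := by
      push_cast
      rw [div_le_iff₀ (by linarith)]
      linarith
    push_cast at *
    linarith
  | succ n hn ih =>
    have hn' : (3000 : ℝ) ≤ n := by exact_mod_cast hn
    have hth := theta_le_linear (N := n) (by omega)
    obtain ⟨h1, h2⟩ := log_succ_sub_log_bounds (k := n) (by omega)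
    have ha : 8.006 < Real.log n :=
      log_3000_gt.trans_le (Real.log_le_log (by norm_num) hn')
    have hstep := partial_summation_step hn' ha h1 h2
    have hπ : (Nat.primeCounting (n + 1) : ℝ) =
        Nat.primeCounting n + if (n + 1).Prime then 1 else 0 := by
      have h : Nat.primeCounting (n + 1) =
          Nat.primeCounting n + if (n + 1).Prime then 1 else 0 := Nat.count_succ _ _
      rw [h]
      push_cast
      rfl
    rw [hπ, theta_succ]
    push_cast
    generalize hA : Real.log (n : ℝ) = a at *
    generalize hC : Real.log ((n : ℝ) + 1) = c at *
    have hca : a ≤ c := by nlinarith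
    have ha0 : 0 < a := by linarith
    have hc0 : 0 < c := by linarith
    have hinv : 0 ≤ 1 / a - 1 / c := sub_nonneg.2 (one_div_le_one_div_of_le ha0 hca)
    have hmul := mul_le_mul_of_nonneg_right hth hinv
    have e1 : Chebyshev.theta n * (1 / a - 1 / c) =
        Chebyshev.theta n / a - Chebyshev.theta n / c := by ring
    have e2 : (1.12 * n + 70) * (1 / a - 1 / c) =
        1.12 * n * (1 / a - 1 / c) + 70 / a - 70 / c := by ring
    have e3 : (Chebyshev.theta n + if (n + 1).Prime then c else 0) / c =
        Chebyshev.theta n / c + if (n + 1).Prime then 1 else 0 := by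
      rw [add_div]
      split_ifs
      · rw [div_self hc0.ne']
      · rw [zero_div]
    rw [e3]
    linarith

/-- The inequality `2 π(n) ≤ π(3n) + 2` in the range of Chebyshev's estimates. -/
lemma two_mul_pi_le_of_le {n : ℕ} (hn : 320000 ≤ n) :
    2 * Nat.primeCounting n ≤ Nat.primeCounting (3 * n) + 2 := by
  have hn' : (320000 : ℝ) ≤ n := by exact_mod_cast hn
  have hn0 : (0 : ℝ) < n := by linarith
  have hup := pi_le_theta_div_log (n := n) (by omega)
  have hth := theta_le_linear (N := n) (by omega)
  have hlow := (chebyshevLog_bounds (N := 3 * n) (by omega)).1.trans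
    ((chebyshevLog_le_psi _).trans (Chebyshev.psi_le_primeCounting_mul_log _))
  have hA := chebyshevConst_bounds.1
  have e3 : Real.log ((3 * n : ℕ) : ℝ) = Real.log n + Real.log 3 := by
    push_cast
    rw [Real.log_mul (by norm_num) hn0.ne', add_comm]
  have eM : Real.log (320000 : ℝ) = 9 * Real.log 2 + 4 * Real.log 5 := by
    rw [show (320000 : ℝ) = 2 ^ 9 * 5 ^ 4 by norm_num,
      Real.log_mul (by norm_num) (by norm_num), Real.log_pow, Real.log_pow]
    norm_num
  have l2 := Real.log_two_gt_d9
  have l2' := Real.log_two_lt_d9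
  have l3 := Real.log_three_gt_d9
  have l3' := Real.log_three_lt_d9
  have l5 := Real.log_five_gt_d9
  have l5' := Real.log_five_lt_d9
  have hL : 12.67 < Real.log n := by
    have := Real.log_le_log (by norm_num) hn'
    rw [eM] at this
    norm_num at *
    linarith
  have hLup : Real.log n ≤ n / 320000 + 11.68 := by
    have := log_le_div_add_log (M := 320000) (by norm_num) hn0
    rw [eM] at this
    norm_num at *
    linarith
  rw [e3] at hlow
  push_cast at hlow
  have hAn : 0.92129 * (3 * (n : ℝ)) ≤ chebyshevConst * (3 * n) := by gcongr
  generalize Real.log n = L at *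
  generalize Real.log 3 = l at *
  have hL0 : 0 < L := by linarith
  have hup' : (Nat.primeCounting n : ℝ) ≤ 1.12 * n / L + 1.5 * n / L ^ 2 + 440 := by
    have : Chebyshev.theta n / L ≤ (1.12 * n + 70) / L := by gcongr
    rw [add_div] at this
    linarith
  by_contra hcon
  have hcon' : (Nat.primeCounting (3 * n) : ℝ) + 2 ≤ 2 * Nat.primeCounting n := by
    exact_mod_cast (by omega :
      Nat.primeCounting (3 * n) + 2 ≤ 2 * Nat.primeCounting n)
  have hLl : 0 < L + l := by linarith
  have hchain : (Nat.primeCounting (3 * n) : ℝ) * (L + l) ≤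
      (2 * (1.12 * n / L + 1.5 * n / L ^ 2 + 440)) * (L + l) := by
    gcongr
    linarith
  -- The constant and logarithmic terms contribute less than `0.04 n`.
  have hsmall : 885 * (L + l) ≤ 0.04 * n := by
    norm_num at *
    nlinarith
  have hX : 0 ≤ 2 * (1.12 * n / L + 1.5 * n / L ^ 2) := by positivity
  have hmain : 2.72387 * (n : ℝ) ≤ (2 * (1.12 * n / L + 1.5 * n / L ^ 2)) * (L + 1.0987) := by
    have hl : l ≤ 1.0987 := by
      norm_num at *
      linarith
    have hXl : (2 * (1.12 * n / L + 1.5 * n / L ^ 2)) * (L + l) ≤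
        (2 * (1.12 * n / L + 1.5 * n / L ^ 2)) * (L + 1.0987) := by gcongr
    linarith
  have e : (2 * (1.12 * n / L + 1.5 * n / L ^ 2)) * (L + 1.0987) =
      n * (2.24 * L ^ 2 + (2.24 * 1.0987 + 3) * L + 3 * 1.0987) / L ^ 2 := by
    field_simp
    ring
  rw [e, le_div_iff₀ (by positivity)] at hmain
  have hquad : 2.72387 * L ^ 2 ≤ 2.24 * L ^ 2 + (2.24 * 1.0987 + 3) * L + 3 * 1.0987 := by
    refine le_of_mul_le_mul_left ?_ hn0
    linarith
  -- `0.48387 L² ≤ 5.461088 L + 3.2961` fails for `L > 12.67`.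
  nlinarith

/-! ### Prime divisors of odd numbers below `p_{2k-2}` -/

lemma two_mul_pi_le {n : ℕ} (hn : 5 ≤ n) :
    2 * Nat.primeCounting n ≤ Nat.primeCounting (3 * n) + 2 := by
  rcases Nat.lt_or_ge n 320000 with h | h
  · exact two_mul_pi_le_of_lt hn (by omega)
  · exact two_mul_pi_le_of_le h

/-- With 1-based indices: `p_{2k-2} ≤ 3 p_k` for `k ≥ 3`. -/
lemma nth_prime_le_three_mul {k : ℕ} (hk : 3 ≤ k) :
    Nat.nth Nat.Prime (2 * k - 3) ≤ 3 * Nat.nth Nat.Prime (k - 1) := by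
  have hπ : Nat.primeCounting (Nat.nth Nat.Prime (k - 1)) = k := by
    have := Nat.count_nth_succ_of_infinite Nat.infinite_setOfPred_prime (k - 1)
    rw [Nat.primeCounting, Nat.primeCounting', this]
    omega
  have h5 : 5 ≤ Nat.nth Nat.Prime (k - 1) := by
    have := Nat.nth_monotone Nat.infinite_setOfPred_prime (show 2 ≤ k - 1 by omega)
    rwa [Nat.nth_prime_two_eq_five] at this
  have h := two_mul_pi_le h5
  rw [hπ] at h
  refine Nat.le_of_lt_succ (Nat.nth_lt_of_lt_count ?_)
  change 2 * k - 3 < Nat.primeCounting (3 * Nat.nth Nat.Prime (k - 1))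
  omega

/-- An odd `v` below `p_{2k-2}` with a prime divisor `q ≥ p_k` equals `q`, since otherwise
`v ≥ 3 q ≥ 3 p_k`. -/
lemma eq_of_prime_dvd_of_le {k v q : ℕ} (hk : 3 ≤ k) (hv : v < Nat.nth Nat.Prime (2 * k - 3))
    (hodd : Odd v) (hqv : q ∣ v) (hq : Nat.nth Nat.Prime (k - 1) ≤ q) : v = q := by
  obtain ⟨c, rfl⟩ := hqv
  have h := nth_prime_le_three_mul hk
  have hc : c < 3 := by
    by_contra hc
    have : q * 3 ≤ q * c := Nat.mul_le_mul_left _ (by omega)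
    omega
  have hcodd : Odd c := (Nat.odd_mul.1 hodd).2
  have : c = 1 := by
    obtain ⟨r, rfl⟩ := hcodd
    omega
  rw [this, mul_one]

/-- An odd prime below `p_k` is one of `p_2, …, p_{k-1}`. -/
lemma exists_index_of_odd_prime {q k : ℕ} (hq : q.Prime) (hodd : Odd q)
    (hlt : q < Nat.nth Nat.Prime (k - 1)) :
    ∃ j, 2 ≤ j ∧ j ≤ k - 1 ∧ q = Nat.nth Nat.Prime (j - 1) := by
  have hn := Nat.nth_count hq
  have hmono := Nat.nth_strictMono Nat.infinite_setOfPred_prime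
  refine ⟨Nat.count Nat.Prime q + 1, ?_, ?_, by rw [Nat.add_sub_cancel, hn]⟩
  · by_contra h
    have h0 : Nat.count Nat.Prime q = 0 := by omega
    rw [h0, Nat.nth_prime_zero_eq_two] at hn
    subst hn
    exact absurd hodd (by decide)
  · rw [← hn] at hlt
    have := hmono.lt_iff_lt.1 hlt
    omega

/-- Let `k ≥ 3` and `x = p_{2k-2} - 1`.  Every odd `v ∈ [1, x]` either has all prime
divisors among `{p_2, ..., p_{k-1}}` or is one of the primes `p_k, ..., p_{2k-3}`;
consequently exactly `x/2 - (k-2)` odd integers in `[1, x]` have all prime divisors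
among `{p_2, ..., p_{k-1}}` (counting `1` among them). -/
theorem odd_forced_vertices_count (k : ℕ) (hk : 3 ≤ k) :
    (∀ v ∈ Set.Icc 1 (Nat.nth Nat.Prime (2 * k - 3) - 1), Odd v →
      (∀ q : ℕ, q.Prime → q ∣ v →
        ∃ j, 2 ≤ j ∧ j ≤ k - 1 ∧ q = Nat.nth Nat.Prime (j - 1)) ∨
      (∃ j, k ≤ j ∧ j ≤ 2 * k - 3 ∧ v = Nat.nth Nat.Prime (j - 1))) ∧
    {v ∈ Set.Icc 1 (Nat.nth Nat.Prime (2 * k - 3) - 1) | Odd v ∧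
      ∀ q : ℕ, q.Prime → q ∣ v →
        ∃ j, 2 ≤ j ∧ j ≤ k - 1 ∧ q = Nat.nth Nat.Prime (j - 1)}.ncard
      = (Nat.nth Nat.Prime (2 * k - 3) - 1) / 2 - (k - 2) := by
  have hmono := Nat.nth_strictMono Nat.infinite_setOfPred_prime
  set x := Nat.nth Nat.Prime (2 * k - 3) - 1 with hx
  have hx1 : x + 1 = Nat.nth Nat.Prime (2 * k - 3) := by
    have := (Nat.prime_nth_prime (2 * k - 3)).pos
    omega
  have hdich : ∀ v ∈ Set.Icc 1 x, Odd v →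
      (∀ q : ℕ, q.Prime → q ∣ v →
        ∃ j, 2 ≤ j ∧ j ≤ k - 1 ∧ q = Nat.nth Nat.Prime (j - 1)) ∨
      (∃ j, k ≤ j ∧ j ≤ 2 * k - 3 ∧ v = Nat.nth Nat.Prime (j - 1)) := by
    rintro v ⟨hv1, hvx⟩ hodd
    by_cases h : ∃ q : ℕ, q.Prime ∧ q ∣ v ∧ Nat.nth Nat.Prime (k - 1) ≤ q
    · obtain ⟨q, hq, hqv, hkq⟩ := h
      right
      have hvq := eq_of_prime_dvd_of_le hk (by omega) hodd hqv hkq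
      subst hvq
      have hn := Nat.nth_count hq
      refine ⟨Nat.count Nat.Prime v + 1, ?_, ?_, by rw [Nat.add_sub_cancel, hn]⟩
      · have := hmono.le_iff_le.1 (hkq.trans_eq hn.symm)
        omega
      · have : Nat.nth Nat.Prime (Nat.count Nat.Prime v) < Nat.nth Nat.Prime (2 * k - 3) := by
          omega
        have := hmono.lt_iff_lt.1 this
        omega
    · push Not at h
      left
      intro q hq hqv
      exact exists_index_of_odd_prime hq (hodd.of_dvd_nat hqv) (h q hq hqv)
  refine ⟨hdich, ?_⟩
  set S := {v ∈ Set.Icc 1 x | Odd v ∧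
      ∀ q : ℕ, q.Prime → q ∣ v →
        ∃ j, 2 ≤ j ∧ j ≤ k - 1 ∧ q = Nat.nth Nat.Prime (j - 1)} with hS
  set R : Finset ℕ := (Finset.Ico (k - 1) (2 * k - 3)).image (Nat.nth Nat.Prime) with hR
  set O : Finset ℕ := (Finset.range (x / 2)).image (fun i => 2 * i + 1) with hO
  have hRcard : R.card = k - 2 := by
    rw [hR, Finset.card_image_of_injective _ hmono.injective, Nat.card_Ico]
    omega
  have hOcard : O.card = x / 2 := by
    rw [hO, Finset.card_image_of_injective _ (fun a b h => by simpa using h), Finset.card_range]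
  have hp_odd : ∀ m, 1 ≤ m → Odd (Nat.nth Nat.Prime m) := by
    intro m hm
    refine (Nat.prime_nth_prime m).odd_of_ne_two fun h => ?_
    have := hmono (show 0 < m by omega)
    rw [Nat.nth_prime_zero_eq_two, h] at this
    omega
  have hxeven : x % 2 = 0 := by
    obtain ⟨r, hr⟩ := hp_odd (2 * k - 3) (by omega)
    omega
  have hmemO : ∀ v, v ∈ O ↔ v ∈ Set.Icc 1 x ∧ Odd v := by
    intro v
    simp only [hO, Finset.mem_image, Finset.mem_range, Set.mem_Icc]
    constructor
    · rintro ⟨i, hi, rfl⟩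
      exact ⟨by omega, ⟨i, rfl⟩⟩
    · rintro ⟨⟨h1, h2⟩, ⟨i, rfl⟩⟩
      exact ⟨i, by omega, rfl⟩
  have hRO : R ⊆ O := by
    intro v hv
    obtain ⟨m, hm, rfl⟩ := Finset.mem_image.1 hv
    rw [Finset.mem_Ico] at hm
    refine (hmemO _).2 ⟨⟨(Nat.prime_nth_prime m).one_le, ?_⟩, hp_odd m (by omega)⟩
    have : Nat.nth Nat.Prime m < Nat.nth Nat.Prime (2 * k - 3) := hmono hm.2
    omega
  -- By the dichotomy, the odd numbers outside `S` are the `k - 2` primes `p_k, …, p_{2k-3}`.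
  have hSeq : S = ((O \ R : Finset ℕ) : Set ℕ) := by
    ext v
    rw [Finset.mem_coe, Finset.mem_sdiff, hmemO]
    constructor
    · rintro ⟨hv, hodd, hsm⟩
      refine ⟨⟨hv, hodd⟩, fun hvR => ?_⟩
      obtain ⟨m, hm, rfl⟩ := Finset.mem_image.1 hvR
      rw [Finset.mem_Ico] at hm
      obtain ⟨j, hj2, hjk, hj⟩ := hsm _ (Nat.prime_nth_prime m) dvd_rfl
      have := hmono.injective hj
      omega
    · rintro ⟨⟨hv, hodd⟩, hvR⟩
      refine ⟨hv, hodd, (hdich v hv hodd).resolve_right ?_⟩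
      rintro ⟨j, hj1, hj2, rfl⟩
      exact hvR (Finset.mem_image.2 ⟨j - 1, Finset.mem_Ico.2 (by omega), rfl⟩)
  rw [hSeq, Set.ncard_coe_finset, Finset.card_sdiff_of_subset hRO, hOcard, hRcard]
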